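/- arXiv:2109.11774 — 2 statements merged into one kernel-verified Lean document; each statement's English description precedes it below -/
import Mathlib

section
/- Let μ and L be real numbers with 0 < μ ≤ L, set κ = L/μ, and let γ ≥ 1 be a real number with γ + 1 ≤ 8κ. Let B ≥ 0 and define step sizes η_t = 2/(μ(γ + t)). Let Δ : ℕ → ℝ be a nonnegative sequence satisfying, for all t ≥ 1, Δ_{t+1} ≤ (1 − η_t μ) Δ_t + η_t² B. Then for all t ≥ 1, (L/2) Δ_t ≤ (2κ/(γ + t)) · (B/μ + 2L Δ_1). -/
/-!
With `x = γ + t` the recursion reads `Δ_{t+1} ≤ (1 - 2/x) Δ_t + b/x²`, where `b = 4B/μ²`.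
Any `v ≥ b` with `Δ_1 ≤ v/(γ + 1)` then gives `Δ_t ≤ v/(γ + t)` for all `t ≥ 1` by induction
(`one_step_decay`). Taking the sum `v = 4B/μ² + (γ + 1)Δ_1` and bounding `γ + 1 ≤ 8κ` yields
the stated estimate after multiplication by `L/2`.
-/

/-- The induction step: the bound `v/x` is propagated to `v/(x + 1)`, because
`(x - 2)v + b ≤ (x - 1)v` and `(x - 1)(x + 1) ≤ x²`. -/
lemma one_step_decay {x v b d : ℝ} (hx : 2 ≤ x) (hv : 0 ≤ v) (hb : b ≤ v) (hd : d ≤ v / x) :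
    (1 - 2 / x) * d + b / x ^ 2 ≤ v / (x + 1) := by
  have hx0 : 0 < x := by linarith
  have hc : 0 ≤ 1 - 2 / x := by
    rw [sub_nonneg, div_le_one hx0]
    exact hx
  calc (1 - 2 / x) * d + b / x ^ 2
      ≤ (1 - 2 / x) * (v / x) + v / x ^ 2 := by gcongr
    _ = (x - 1) * v / x ^ 2 := by
        field_simp
        ring
    _ ≤ v / (x + 1) := by
        rw [div_le_div_iff₀ (by positivity) (by positivity)]
        nlinarith

/-- Full-device-participation case of Theorem 1 in deterministic form: from the
one-step recursion `Δ_{t+1} ≤ (1 - η_t μ)Δ_t + η_t²B` with step sizes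
`η_t = 2/(μ(γ + t))`, `κ = L/μ`, `1 ≤ γ` and `γ + 1 ≤ 8κ`, it follows that
`(L/2)Δ_t ≤ (2κ/(γ + t))(B/μ + 2LΔ_1)` for all `t ≥ 1`. -/
theorem fedavg_full_participation_convergence
    (μ L : ℝ) (hμ : 0 < μ) (hμL : μ ≤ L)
    (κ : ℝ) (hκ : κ = L / μ)
    (γ : ℝ) (hγ : 1 ≤ γ) (hγκ : γ + 1 ≤ 8 * κ)
    (B : ℝ) (hB : 0 ≤ B)
    (η : ℕ → ℝ) (hη : ∀ t : ℕ, η t = 2 / (μ * (γ + (t : ℝ))))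
    (Δ : ℕ → ℝ) (hΔ : ∀ t, 0 ≤ Δ t)
    (hrec : ∀ t : ℕ, 1 ≤ t → Δ (t + 1) ≤ (1 - η t * μ) * Δ t + (η t) ^ 2 * B) :
    ∀ t : ℕ, 1 ≤ t →
      L / 2 * Δ t ≤ 2 * κ / (γ + (t : ℝ)) * (B / μ + 2 * L * Δ 1) := by
  have key : ∀ t : ℕ, 1 ≤ t → Δ t ≤ (4 * B / μ ^ 2 + (γ + 1) * Δ 1) / (γ + (t : ℝ)) := by
    have hb : 0 ≤ 4 * B / μ ^ 2 := by positivity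
    have hd : 0 ≤ (γ + 1) * Δ 1 := mul_nonneg (by linarith) (hΔ 1)
    intro t ht
    induction t, ht using Nat.le_induction with
    | base =>
      rw [le_div_iff₀ (by push_cast; linarith)]
      push_cast
      linarith
    | succ t ht ih =>
      have ht' : (1 : ℝ) ≤ t := by exact_mod_cast ht
      have hstep := one_step_decay (x := γ + t) (by linarith) (by linarith)
        (show 4 * B / μ ^ 2 ≤ 4 * B / μ ^ 2 + (γ + 1) * Δ 1 by linarith) ih
      have hx : γ + (t : ℝ) ≠ 0 := by linarith
      have hμ' := hμ.ne'
      have e1 : η t * μ = 2 / (γ + t) := by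
        rw [hη]; field_simp
      have e2 : η t ^ 2 * B = 4 * B / μ ^ 2 / (γ + t) ^ 2 := by
        rw [hη]; field_simp; ring
      have h := hrec t ht
      rw [e1, e2] at h
      push_cast
      rw [← add_assoc]
      exact h.trans hstep
  intro t ht
  have hx : 0 < γ + (t : ℝ) := by positivity
  have hL : 0 < L := hμ.trans_le hμL
  calc L / 2 * Δ t
      ≤ L / 2 * ((4 * B / μ ^ 2 + (γ + 1) * Δ 1) / (γ + t)) := by
        gcongr
        exact key t ht
    _ ≤ L / 2 * ((4 * B / μ ^ 2 + 8 * κ * Δ 1) / (γ + t)) := by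
        have := hΔ 1
        gcongr
    _ = 2 * κ / (γ + t) * (B / μ + 2 * L * Δ 1) := by
        rw [hκ]
        field_simp
        ring
end

section
/- Let μ and L be real numbers with 0 < μ ≤ L, set κ = L/μ, and let γ ≥ 1 be a real number with γ + 1 ≤ 8κ. Let B ≥ 0, D ≥ 0, and let C : ℕ → ℝ satisfy 0 ≤ C_t ≤ D for all t. Define step sizes η_t = 2/(μ(γ + t)). Let H be a real inner product space, let F : H → ℝ be differentiable with L-Lipschitz gradient, let w⋆ ∈ H be a global minimizer of F with F⋆ = F(w⋆), and let (w_t)_{t ≥ 1} be a sequence in H such that the squared distances Δ_t = ‖w_t − w⋆‖² satisfy, for all t ≥ 1, Δ_{t+1} ≤ (1 − η_t μ) Δ_t + η_t² (B + C_t). Then for every T ≥ 1, F(w_T) − F⋆ ≤ (2κ/(γ + T)) · ((B + D)/μ + 2L ‖w_1 − w⋆‖²). -/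
/-!
At the minimizer the derivative of `F` vanishes, so an `L`-Lipschitz derivative gives the quadratic
upper bound `F x - F w⋆ ≤ (L / 2) ‖x - w⋆‖²` (`sub_le_of_lipschitz_fderiv_of_min`). The recursion
with step sizes `2 / (μ (γ + t))` gives `Δ_t ≤ v / (γ + t)` for every `v` that dominates both
`4 (B + D) / μ²` and `(γ + 1) Δ_1` (`le_div_of_recursion`). Taking `v` to be the sum of these two
quantities and using `γ + 1 ≤ 8 κ` yields the stated bound.
-/

/-- The descent inequality based at a global minimizer. -/
lemma sub_le_of_lipschitz_fderiv_of_min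
    {H : Type*} [NormedAddCommGroup H] [NormedSpace ℝ H] {L : ℝ}
    {F : H → ℝ} (hF : Differentiable ℝ F)
    (hlip : ∀ x y : H, ‖fderiv ℝ F x - fderiv ℝ F y‖ ≤ L * ‖x - y‖)
    {a : H} (hmin : ∀ v : H, F a ≤ F v) (x : H) :
    F x - F a ≤ L / 2 * ‖x - a‖ ^ 2 := by
  have h0 : fderiv ℝ F a = 0 :=
    IsLocalMin.fderiv_eq_zero (Filter.Eventually.of_forall hmin)
  set d := x - a with hd
  -- Along the segment from `a` to `x`, `L / 2 * t² * ‖d‖² - F (a + t d)` is monotone.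
  have hder : ∀ t : ℝ, HasDerivAt (fun t : ℝ => L / 2 * t ^ 2 * ‖d‖ ^ 2 - F (a + t • d))
      (L * t * ‖d‖ ^ 2 - fderiv ℝ F (a + t • d) d) t := by
    intro t
    have h1 : HasDerivAt (fun t : ℝ => a + t • d) d t := by
      simpa using ((hasDerivAt_id t).smul_const d).const_add a
    have h2 := (hF (a + t • d)).hasFDerivAt.comp_hasDerivAt t h1
    have h3 : HasDerivAt (fun t : ℝ => L / 2 * t ^ 2 * ‖d‖ ^ 2) (L * t * ‖d‖ ^ 2) t := by
      refine (((hasDerivAt_pow 2 t).const_mul (L / 2)).mul_const (‖d‖ ^ 2)).congr_deriv ?_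
      push_cast
      ring
    exact h3.sub h2
  have hmono : MonotoneOn (fun t : ℝ => L / 2 * t ^ 2 * ‖d‖ ^ 2 - F (a + t • d))
      (Set.Icc 0 1) := by
    apply monotoneOn_of_deriv_nonneg (convex_Icc 0 1)
    · exact fun t _ => (hder t).continuousAt.continuousWithinAt
    · exact fun t _ => (hder t).differentiableAt.differentiableWithinAt
    · intro t ht
      rw [interior_Icc] at ht
      rw [(hder t).deriv, sub_nonneg]
      have h1 := hlip (a + t • d) a
      rw [h0, sub_zero, add_sub_cancel_left, norm_smul, Real.norm_eq_abs, abs_of_pos ht.1] at h1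
      calc fderiv ℝ F (a + t • d) d ≤ ‖fderiv ℝ F (a + t • d) d‖ := Real.le_norm_self _
        _ ≤ ‖fderiv ℝ F (a + t • d)‖ * ‖d‖ := ContinuousLinearMap.le_opNorm _ _
        _ ≤ L * (t * ‖d‖) * ‖d‖ := by gcongr
        _ = L * t * ‖d‖ ^ 2 := by ring
  have h := hmono (Set.left_mem_Icc.2 zero_le_one) (Set.right_mem_Icc.2 zero_le_one) zero_le_one
  simp only [zero_smul, add_zero, one_smul, hd, add_sub_cancel] at h
  linarith

/-- The `O(1 / t)` rate for the recursion `Δ_{t+1} ≤ (1 - 2 / s) Δ_t + A / s²` with `s = γ + t`. -/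
lemma le_div_of_recursion {γ A v : ℝ} (hγ : 1 ≤ γ) {Δ : ℕ → ℝ}
    (hrec : ∀ t : ℕ, 1 ≤ t → Δ (t + 1) ≤ (1 - 2 / (γ + t)) * Δ t + A / (γ + t) ^ 2)
    (hv : 0 ≤ v) (hAv : A ≤ v) (h1 : (γ + 1) * Δ 1 ≤ v) (T : ℕ) (hT : 1 ≤ T) :
    Δ T ≤ v / (γ + T) := by
  induction T, hT using Nat.le_induction with
  | base =>
    rw [le_div_iff₀ (by push_cast; linarith)]
    push_cast
    linarith
  | succ t ht ih =>
    have ht' : (1 : ℝ) ≤ t := by exact_mod_cast ht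
    have hr := hrec t ht
    push_cast
    rw [← add_assoc]
    set s := γ + (t : ℝ) with hs
    have hs2 : 2 ≤ s := by linarith
    have hs0 : 0 < s := by linarith
    have hc : 0 ≤ 1 - 2 / s := by
      rw [sub_nonneg, div_le_one hs0]
      exact hs2
    calc Δ (t + 1) ≤ (1 - 2 / s) * Δ t + A / s ^ 2 := hr
      _ ≤ (1 - 2 / s) * (v / s) + v / s ^ 2 := by gcongr
      _ = v * (s - 1) / s ^ 2 := by field_simp; ring
      -- This is `(s - 1) (s + 1) ≤ s²`.
      _ ≤ v / (s + 1) := by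
        rw [div_le_div_iff₀ (by positivity) (by positivity)]
        nlinarith

/-- Theorem 1 of the paper (convergence of FedAvg in wireless environments) in
deterministic form: taking as hypothesis the conclusion of Lemma 1, with
`Δ_t = ‖w_t - w⋆‖²` satisfying `Δ_{t+1} ≤ (1 - η_t μ)Δ_t + η_t²(B + C_t)`,
`0 ≤ C_t ≤ D`, step sizes `η_t = 2/(μ(γ + t))`, `κ = L/μ`, and `F`
differentiable with `L`-Lipschitz derivative minimized at `w⋆`, one has
`F(w_T) - F⋆ ≤ (2κ/(γ + T))((B + D)/μ + 2L‖w_1 - w⋆‖²)` for all `T ≥ 1`. -/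
theorem fedavg_wireless_convergence
    {H : Type*} [NormedAddCommGroup H] [InnerProductSpace ℝ H]
    (μ L : ℝ) (hμ : 0 < μ) (hμL : μ ≤ L)
    (κ : ℝ) (hκ : κ = L / μ)
    (γ : ℝ) (hγ : 1 ≤ γ) (hγκ : γ + 1 ≤ 8 * κ)
    (B D : ℝ) (hB : 0 ≤ B) (hD : 0 ≤ D)
    (C : ℕ → ℝ) (hC0 : ∀ t, 0 ≤ C t) (hCD : ∀ t, C t ≤ D)
    (η : ℕ → ℝ) (hη : ∀ t : ℕ, η t = 2 / (μ * (γ + (t : ℝ))))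
    (F : H → ℝ) (hF : Differentiable ℝ F)
    (hlip : ∀ x y : H, ‖fderiv ℝ F x - fderiv ℝ F y‖ ≤ L * ‖x - y‖)
    (wstar : H) (hmin : ∀ v : H, F wstar ≤ F v)
    (Fstar : ℝ) (hFstar : Fstar = F wstar)
    (w : ℕ → H)
    (Δ : ℕ → ℝ) (hΔ : ∀ t, Δ t = ‖w t - wstar‖ ^ 2)
    (hrec : ∀ t : ℕ, 1 ≤ t →
      Δ (t + 1) ≤ (1 - η t * μ) * Δ t + (η t) ^ 2 * (B + C t)) :
    ∀ T : ℕ, 1 ≤ T →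
      F (w T) - Fstar ≤
        2 * κ / (γ + (T : ℝ)) * ((B + D) / μ + 2 * L * ‖w 1 - wstar‖ ^ 2) := by
  intro T hT
  subst hκ hFstar
  have hL : 0 < L := hμ.trans_le hμL
  have hΔ0 : 0 ≤ Δ 1 := by rw [hΔ]; positivity
  have hBD : 0 ≤ 4 * (B + D) / μ ^ 2 := by positivity
  have hγΔ : 0 ≤ (γ + 1) * Δ 1 := mul_nonneg (by linarith) hΔ0
  have hdist : Δ T ≤ (4 * (B + D) / μ ^ 2 + (γ + 1) * Δ 1) / (γ + T) := by
    refine le_div_of_recursion (A := 4 * (B + D) / μ ^ 2) hγ (fun t ht => ?_)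
      (by linarith) (by linarith) (by linarith) T hT
    have hs : 0 < γ + (t : ℝ) := by positivity
    have e1 : η t * μ = 2 / (γ + t) := by rw [hη]; field_simp
    have e2 : η t ^ 2 * (B + D) = 4 * (B + D) / μ ^ 2 / (γ + t) ^ 2 := by
      rw [hη]; field_simp; ring
    have hstep := hrec t ht
    have hC : η t ^ 2 * (B + C t) ≤ η t ^ 2 * (B + D) := by
      have := hCD t
      gcongr
    rw [e1] at hstep
    linarith
  have hdesc := sub_le_of_lipschitz_fderiv_of_min hF hlip hmin (w T)
  rw [← hΔ] at hdesc ⊢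
  have hs : 0 < γ + (T : ℝ) := by positivity
  calc F (w T) - F wstar ≤ L / 2 * Δ T := hdesc
    _ ≤ L / 2 * ((4 * (B + D) / μ ^ 2 + (8 * (L / μ)) * Δ 1) / (γ + T)) := by
      refine mul_le_mul_of_nonneg_left (hdist.trans ?_) (by positivity)
      gcongr
    _ = 2 * (L / μ) / (γ + T) * ((B + D) / μ + 2 * L * Δ 1) := by
      field_simp
      ring
end
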